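/- For every real t ≠ 0, lim_{R→∞} (1/(2π))·∫_{−R}^{R} e^{iωt}·f̃_β(ω) dω = f_β(t); equivalently, lim_{R→∞} (1/(2π))·∫_{−R}^{R} cos(ωt)·f̃_β(ω) dω = f_β(t), since f̃_β is even. -/

import Mathlib

open MeasureTheory

/-- `f_β(t) = (2/(βπ))·log((e^{π|t|/β}+1)/(e^{π|t|/β}−1))`, defined for `t ≠ 0`. -/
noncomputable def arakiF (β t : ℝ) : ℝ :=
  (2 / (β * Real.pi)) *
    Real.log ((Real.exp (Real.pi * |t| / β) + 1) / (Real.exp (Real.pi * |t| / β) - 1))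

/-- `f̃_β(ω) = tanh(βω/2)/(βω/2)` for `ω ≠ 0`, and `f̃_β(0) = 1`. -/
noncomputable def qbpFtilde (β ω : ℝ) : ℝ :=
  if ω = 0 then 1 else Real.tanh (β * ω / 2) / (β * ω / 2)


lemma aux_integrable (a : ℝ) (ha : 0 < a) : Integrable (fun ω : ℝ => 1 / (ω ^ 2 + a ^ 2)) := by
  have h := (integrable_inv_one_add_sq.comp_mul_left' (R := a⁻¹) (by positivity)).const_mul (a⁻¹ ^ 2)
  refine h.congr (Filter.Eventually.of_forall fun ω => ?_)
  have : 0 < ω ^ 2 + a ^ 2 := by positivity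
  have : 0 < a ^ 2 + ω ^ 2 := by positivity
  simp only
  field_simp
  ring

lemma aux_integrable_cos (a : ℝ) (ha : 0 < a) (t : ℝ) :
    Integrable (fun ω : ℝ => Real.cos (ω * t) * (1 / (ω ^ 2 + a ^ 2))) := by
  refine (aux_integrable a ha).mono' (by fun_prop) (Filter.Eventually.of_forall fun ω => ?_)
  have h0 : 0 ≤ 1 / (ω ^ 2 + a ^ 2) := by positivity
  rw [norm_mul, Real.norm_of_nonneg h0]
  exact mul_le_of_le_one_left h0 (Real.abs_cos_le_one _)

lemma aux_split {f g₁ g₂ : ℝ → ℂ} (h1 : ∀ x ∈ Set.Iic (0:ℝ), f x = g₁ x)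
    (h2 : ∀ x ∈ Set.Ioi (0:ℝ), f x = g₂ x) (hg1 : IntegrableOn g₁ (Set.Iic 0))
    (hg2 : IntegrableOn g₂ (Set.Ioi 0)) :
    Integrable f ∧ ∫ x, f x = (∫ x in Set.Iic 0, g₁ x) + ∫ x in Set.Ioi 0, g₂ x := by
  have i1 : IntegrableOn f (Set.Iic 0) :=
    hg1.congr_fun (fun x hx => (h1 x hx).symm) measurableSet_Iic
  have i2 : IntegrableOn f (Set.Ioi 0) :=
    hg2.congr_fun (fun x hx => (h2 x hx).symm) measurableSet_Ioi
  refine ⟨?_, ?_⟩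
  · rw [← integrableOn_univ, ← Set.Iic_union_Ioi (a := (0:ℝ))]
    exact i1.union i2
  · rw [← intervalIntegral.integral_Iic_add_Ioi i1 i2, setIntegral_congr_fun measurableSet_Iic h1,
      setIntegral_congr_fun measurableSet_Ioi h2]

open FourierTransform in
lemma aux_fourier (a : ℝ) (ha : 0 < a) (t : ℝ) :
    ∫ ω : ℝ, Real.cos (ω * t) * (1 / (ω ^ 2 + a ^ 2)) = Real.pi / a * Real.exp (-(a * |t|)) := by
  let g : ℝ → ℂ := fun x => ((Real.exp (-(a * |x|)) : ℝ) : ℂ)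
  have hgc : Continuous g := by fun_prop
  have key (w : ℝ) := aux_split (f := fun x : ℝ => Complex.exp (↑(-2 * Real.pi * x * w) * Complex.I) • g x)
    (g₁ := fun x : ℝ => Complex.exp ((a - 2 * Real.pi * w * Complex.I) * x))
    (g₂ := fun x : ℝ => Complex.exp ((-a - 2 * Real.pi * w * Complex.I) * x))
    (by
      intro x hx
      simp only [g, smul_eq_mul, abs_of_nonpos (Set.mem_Iic.1 hx)]
      push_cast
      rw [← Complex.exp_add]; congr 1; ring)
    (by
      intro x hx
      simp only [g, smul_eq_mul, abs_of_pos (Set.mem_Ioi.1 hx)]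
      push_cast
      rw [← Complex.exp_add]; congr 1; ring)
    (integrableOn_exp_mul_complex_Iic (by simpa using ha) 0)
    (integrableOn_exp_mul_complex_Ioi (by simpa using ha) 0)
  have hgi : Integrable g := by simpa using (key 0).1
  have hF (w : ℝ) : 𝓕 g w = ((2 * a * (1 / ((2 * Real.pi * w) ^ 2 + a ^ 2)) : ℝ) : ℂ) := by
    rw [Real.fourier_real_eq_integral_exp_smul, (key w).2, integral_exp_mul_complex_Iic (by simpa using ha),
      integral_exp_mul_complex_Ioi (by simpa using ha)]
    have h1 : (a - 2 * Real.pi * w * Complex.I : ℂ) ≠ 0 := by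
      intro h; have := congrArg Complex.re h; simp at this; exact ha.ne' this
    have h2 : (-a - 2 * Real.pi * w * Complex.I : ℂ) ≠ 0 := by
      intro h; have := congrArg Complex.re h; simp at this; exact ha.ne' this
    have h3 : ((2 * Real.pi * w) ^ 2 + a ^ 2 : ℂ) ≠ 0 := by
      have : (2 * Real.pi * w) ^ 2 + a ^ 2 ≠ 0 := by positivity
      exact_mod_cast this
    have h4 : ((2 * Real.pi * w) ^ 2 + a ^ 2 : ℂ)
        = -((a - 2 * Real.pi * w * Complex.I) * (-a - 2 * Real.pi * w * Complex.I)) := by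
      ring_nf; simp [Complex.I_sq]
    push_cast
    rw [h4]
    simp only [mul_zero, Complex.exp_zero]
    field_simp
    ring
  have hFi : Integrable (𝓕 g) := by
    have : 𝓕 g = fun w => ((2 * a * (1 / ((2 * Real.pi * w) ^ 2 + a ^ 2)) : ℝ) : ℂ) := funext hF
    rw [this]
    exact (((aux_integrable a ha).comp_mul_left' (R := 2 * Real.pi) (by positivity)).const_mul _).ofReal
  have hinv := congrFun (hgc.fourierInv_fourier_eq hgi hFi) t
  rw [Real.fourierInv_eq'] at hinv
  have hre := congrArg Complex.re hinv
  have hint : Integrable (fun v : ℝ => Complex.exp (↑(2 * Real.pi * inner ℝ v t) * Complex.I) • 𝓕 g v) := by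
    refine hFi.norm.mono' ?_ (Filter.Eventually.of_forall fun v => ?_)
    · have hc : Continuous (fun v : ℝ => Complex.exp (↑(2 * Real.pi * inner ℝ v t) * Complex.I)) := by
        fun_prop
      exact hc.aestronglyMeasurable.smul hFi.1
    · rw [norm_smul, Complex.norm_exp_ofReal_mul_I, one_mul]
  have h5 : (∫ v : ℝ, Complex.exp (↑(2 * Real.pi * inner ℝ v t) * Complex.I) • 𝓕 g v).re
     = ∫ v : ℝ, (Complex.exp (↑(2 * Real.pi * inner ℝ v t) * Complex.I) • 𝓕 g v).re :=
    (integral_re hint).symm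
  rw [h5] at hre
  have h6 : ∀ v : ℝ, (Complex.exp (↑(2 * Real.pi * inner ℝ v t) * Complex.I) • 𝓕 g v).re
      = 2 * a * (Real.cos ((2 * Real.pi * v) * t) * (1 / ((2 * Real.pi * v) ^ 2 + a ^ 2))) := by
    intro v
    rw [hF, smul_eq_mul, Complex.re_mul_ofReal, Complex.exp_ofReal_mul_I_re]
    have : inner ℝ v t = v * t := by simp [mul_comm]
    rw [this, ← mul_assoc (2 * Real.pi)]; ring
  simp_rw [h6] at hre
  rw [integral_const_mul, Measure.integral_comp_mul_left (fun ω : ℝ => Real.cos (ω * t) * (1 / (ω ^ 2 + a ^ 2))) (2 * Real.pi)] at hre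
  simp only [g, Complex.ofReal_re, smul_eq_mul] at hre
  rw [← hre, abs_of_pos (by positivity)]
  generalize (∫ ω : ℝ, Real.cos (ω * t) * (1 / (ω ^ 2 + a ^ 2))) = J
  field_simp

lemma aux_bound (a : ℝ) (ha : 0 < a) (t : ℝ) (ht : t ≠ 0) (R : ℝ) (hR : 0 ≤ R) :
    |∫ ω in (-R)..R, Real.cos (ω * t) * (1 / (ω ^ 2 + a ^ 2))| ≤ (2 + Real.pi) / |t| * (1 / a ^ 2) := by
  have hpos : ∀ ω : ℝ, 0 < ω ^ 2 + a ^ 2 := fun ω => by positivity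
  have hu : ∀ ω ∈ Set.uIcc (-R) R, HasDerivAt (fun ω : ℝ => 1 / (ω ^ 2 + a ^ 2))
      (-(2 * ω) / (ω ^ 2 + a ^ 2) ^ 2) ω := by
    intro ω _
    have := ((hasDerivAt_pow 2 ω).add_const (a ^ 2)).fun_inv (hpos ω).ne'
    simpa using this
  have hv : ∀ ω ∈ Set.uIcc (-R) R, HasDerivAt (fun ω : ℝ => Real.sin (ω * t) / t)
      (Real.cos (ω * t)) ω := by
    intro ω _
    have := ((hasDerivAt_mul_const (x := ω) t).sin).div_const t
    simpa [ht] using this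
  have hcu : Continuous (fun ω : ℝ => -(2 * ω) / (ω ^ 2 + a ^ 2) ^ 2) :=
    Continuous.div (by fun_prop) (by fun_prop) (fun ω => (pow_pos (hpos ω) 2).ne')
  have hp := intervalIntegral.integral_mul_deriv_eq_deriv_mul hu hv
    (hcu.intervalIntegrable _ _) (Continuous.intervalIntegrable (by fun_prop) _ _)
  have hsw : (∫ ω in (-R)..R, Real.cos (ω * t) * (1 / (ω ^ 2 + a ^ 2)))
     = ∫ ω in (-R)..R, (1 / (ω ^ 2 + a ^ 2)) * Real.cos (ω * t) := by
    simp_rw [mul_comm]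
  have hI : ‖∫ ω in (-R)..R, -(2 * ω) / (ω ^ 2 + a ^ 2) ^ 2 * (Real.sin (ω * t) / t)‖
      ≤ ∫ ω in (-R)..R, (1 / (a * |t|)) * (1 / (ω ^ 2 + a ^ 2)) := by
    refine intervalIntegral.norm_integral_le_of_norm_le (by linarith)
      (Filter.Eventually.of_forall fun ω _ => ?_)
      ((aux_integrable a ha).const_mul _).intervalIntegrable
    have hs := Real.abs_sin_le_one (ω * t)
    have h2 : 2 * a * |ω| ≤ ω ^ 2 + a ^ 2 := by nlinarith [sq_nonneg (|ω| - a), sq_abs ω]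
    have ht' : 0 < |t| := abs_pos.2 ht
    have hp := hpos ω
    rw [Real.norm_eq_abs, abs_mul, abs_div, abs_div, abs_neg, abs_mul, abs_two,
      abs_of_pos (pow_pos hp 2)]
    calc 2 * |ω| / (ω ^ 2 + a ^ 2) ^ 2 * (|Real.sin (ω * t)| / |t|)
        ≤ ((ω ^ 2 + a ^ 2) / a) / (ω ^ 2 + a ^ 2) ^ 2 * (1 / |t|) := by
          gcongr
          rw [le_div_iff₀ ha]; linarith
      _ = _ := by field_simp
  have hJ : (∫ ω in (-R)..R, (1 / (a * |t|)) * (1 / (ω ^ 2 + a ^ 2))) ≤ Real.pi / |t| * (1 / a ^ 2) := by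
    have h0 := aux_fourier a ha 0
    simp only [mul_zero, Real.cos_zero, one_mul, abs_zero, neg_zero, Real.exp_zero, mul_one] at h0
    rw [intervalIntegral.integral_const_mul, intervalIntegral.integral_of_le (by linarith)]
    have := setIntegral_le_integral (s := Set.Ioc (-R) R) (aux_integrable a ha)
      (Filter.Eventually.of_forall fun ω => by have := hpos ω; simp; positivity)
    rw [h0] at this
    have ht' : 0 < |t| := abs_pos.2 ht
    calc _ ≤ (1 / (a * |t|)) * (Real.pi / a) := by gcongr
      _ = _ := by field_simp
  rw [hsw, hp]
  have hb : |1 / (R ^ 2 + a ^ 2) * (Real.sin (R * t) / t)| ≤ 1 / |t| * (1 / a ^ 2) := by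
    have ht' : 0 < |t| := abs_pos.2 ht
    rw [abs_mul, abs_div (Real.sin _), abs_of_pos (one_div_pos.2 (hpos R)), mul_comm]
    gcongr
    · exact Real.abs_sin_le_one _
    · nlinarith [sq_nonneg R]
  have hb' : |1 / ((-R) ^ 2 + a ^ 2) * (Real.sin (-R * t) / t)| ≤ 1 / |t| * (1 / a ^ 2) := by
    rw [neg_sq, neg_mul, Real.sin_neg, neg_div, mul_neg, abs_neg]; exact hb
  rw [Real.norm_eq_abs] at hI
  calc _ ≤ 1 / |t| * (1 / a ^ 2) + 1 / |t| * (1 / a ^ 2) + Real.pi / |t| * (1 / a ^ 2) := by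
        refine (abs_sub _ _).trans (add_le_add ((abs_sub _ _).trans (add_le_add hb hb')) (hI.trans hJ))
    _ = _ := by ring

lemma aux_coth (y : ℝ) (hy : y ≠ 0) :
    HasSum (fun n : ℕ => 2 * y / (y ^ 2 + ((n : ℝ) + 1) ^ 2))
      (Real.pi * (Real.cosh (Real.pi * y) / Real.sinh (Real.pi * y)) - 1 / y) := by
  have hz : (Complex.I * y) ∈ Complex.integerComplement := by
    rintro ⟨n, hn⟩
    have := congrArg Complex.im hn
    simp at this
    exact hy this.symm
  have h := (summable_cotTerm hz).hasSum
  have h2 := cot_series_rep' hz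
  have h3 : HasSum (fun n : ℕ => cotTerm (Complex.I * y) n)
     (Real.pi * Complex.cot (Real.pi * (Complex.I * y)) - 1 / (Complex.I * y)) := by
    rw [h2]; exact h
  have h4 := h3.mul_left Complex.I
  rw [← Complex.hasSum_ofReal]
  have hs : (Real.sinh (Real.pi * y)) ≠ 0 := by
    rw [Ne, Real.sinh_eq_zero]; positivity
  have hs' : Complex.sinh (Real.pi * y) ≠ 0 := by exact_mod_cast hs
  have hy' : (y : ℂ) ≠ 0 := by exact_mod_cast hy
  convert! h4 using 1
  · funext n
    rw [cotTerm_identity hz]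
    have h5 : ((y : ℂ) ^ 2 + (n + 1) ^ 2) ≠ 0 := by
      have : y ^ 2 + ((n : ℝ) + 1) ^ 2 ≠ 0 := by positivity
      exact_mod_cast this
    have h6 : (Complex.I * y + (n + 1)) * (Complex.I * y - (n + 1)) = -((y : ℂ) ^ 2 + (n + 1) ^ 2) := by
      ring_nf; simp; ring
    rw [h6]
    push_cast
    rw [show Complex.I * (2 * (Complex.I * y) * (1 / -((y : ℂ) ^ 2 + (n + 1) ^ 2)))
      = (Complex.I * Complex.I) * (2 * y * (1 / -((y : ℂ) ^ 2 + (n + 1) ^ 2))) by ring, Complex.I_mul_I]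
    field_simp
  · rw [show (Real.pi : ℂ) * (Complex.I * y) = (Real.pi * y) * Complex.I by ring,
      Complex.cot_eq_cos_div_sin, Complex.cos_mul_I, Complex.sin_mul_I]
    push_cast
    field_simp

lemma aux_tanh (y : ℝ) (hy : y ≠ 0) :
    HasSum (fun n : ℕ => 8 * y / (4 * y ^ 2 + (2 * (n : ℝ) + 1) ^ 2))
      (Real.pi * Real.tanh (Real.pi * y)) := by
  let g : ℕ → ℝ := fun n => 8 * y / (4 * y ^ 2 + (n : ℝ) ^ 2)
  have h1 : HasSum g (2 * (Real.pi * (Real.cosh (Real.pi * (2 * y)) / Real.sinh (Real.pi * (2 * y))) - 1 / (2 * y)) + 2 / y) := by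
    have := (aux_coth (2 * y) (by positivity)).mul_left 2
    rw [← hasSum_nat_add_iff' 1]
    convert! this using 1
    · funext n; simp only [g]; push_cast; ring
    · simp [g]; field_simp; ring
  have h2 : HasSum (fun k => g (2 * k)) ((Real.pi * (Real.cosh (Real.pi * y) / Real.sinh (Real.pi * y)) - 1 / y) + 2 / y) := by
    have := (aux_coth y hy)
    rw [← hasSum_nat_add_iff' 1]
    convert! this using 1
    · funext n; simp only [g]; push_cast
      have : y ^ 2 + ((n : ℝ) + 1) ^ 2 ≠ 0 := by positivity
      have : 4 * y ^ 2 + (2 * ((n : ℝ) + 1)) ^ 2 ≠ 0 := by positivity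
      field_simp; ring
    · simp [g]; field_simp; ring
  have h3 : Summable (fun k => g (2 * k + 1)) :=
    h1.summable.comp_injective (i := fun k : ℕ => 2 * k + 1) (fun a b h => by simpa using h)
  have h4 := h2.even_add_odd h3.hasSum
  have h5 := h1.unique h4
  have h6 := h3.hasSum
  convert! h6 using 1
  · funext n; simp [g]
  · have hs : (Real.sinh (Real.pi * y)) ≠ 0 := by
      rw [Ne, Real.sinh_eq_zero]; positivity
    have hc := (Real.cosh_pos (Real.pi * y)).ne'
    have e : Real.pi * Real.tanh (Real.pi * y) = 2 * (Real.pi * (Real.cosh (Real.pi * (2 * y)) / Real.sinh (Real.pi * (2 * y)))) - Real.pi * (Real.cosh (Real.pi * y) / Real.sinh (Real.pi * y)) := by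
      rw [show Real.pi * (2 * y) = 2 * (Real.pi * y) by ring, Real.sinh_two_mul, Real.cosh_two_mul, Real.tanh_eq_sinh_div_cosh]
      field_simp
      ring
    rw [e]
    have : 2 * (1 / (2 * y)) = 1 / y := by field_simp
    linarith

lemma aux_ftilde (β : ℝ) (hβ : 0 < β) (ω : ℝ) (hω : ω ≠ 0) :
    HasSum (fun k : ℕ => 8 / β ^ 2 * (1 / (ω ^ 2 + ((2 * (k : ℝ) + 1) * Real.pi / β) ^ 2)))
      (qbpFtilde β ω) := by
  have hp := Real.pi_pos
  have hy : β * ω / (2 * Real.pi) ≠ 0 := by positivity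
  have h := (aux_tanh _ hy).mul_left (2 / (Real.pi * (β * ω)))
  have e : Real.pi * (β * ω / (2 * Real.pi)) = β * ω / 2 := by field_simp
  rw [e] at h
  rw [qbpFtilde, if_neg hω]
  convert! h using 1
  · funext k
    have h1 : ω ^ 2 + ((2 * (k : ℝ) + 1) * Real.pi / β) ^ 2 ≠ 0 := by positivity
    have h2 : 4 * (β * ω / (2 * Real.pi)) ^ 2 + (2 * (k : ℝ) + 1) ^ 2 ≠ 0 := by positivity
    have h3 : 4 * (β * ω / (2 * Real.pi)) ^ 2 + (2 * (k : ℝ) + 1) ^ 2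
        = β ^ 2 / Real.pi ^ 2 * (ω ^ 2 + ((2 * (k : ℝ) + 1) * Real.pi / β) ^ 2) := by
      field_simp
      ring
    rw [h3]
    generalize ω ^ 2 + ((2 * (k : ℝ) + 1) * Real.pi / β) ^ 2 = D at h1
    field_simp
  · field_simp

lemma aux_summable (β : ℝ) (hβ : 0 < β) :
    Summable (fun k : ℕ => 1 / ((2 * (k : ℝ) + 1) * Real.pi / β) ^ 2) := by
  have h : Summable (fun n : ℕ => 1 / (n : ℝ) ^ 2) := by
    simp
  have h2 := (h.comp_injective (i := fun k : ℕ => 2 * k + 1) (fun a b h => by simpa using h)).mul_left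
    (β ^ 2 / Real.pi ^ 2)
  refine h2.congr fun k => ?_
  simp only [Function.comp]
  push_cast
  have hp := Real.pi_pos
  field_simp

lemma aux_log (β : ℝ) (hβ : 0 < β) (t : ℝ) (ht : t ≠ 0) :
    HasSum (fun k : ℕ => 1 / (2 * Real.pi) * (8 / β ^ 2 * (Real.pi / ((2 * (k : ℝ) + 1) * Real.pi / β)
      * Real.exp (-((2 * (k : ℝ) + 1) * Real.pi / β * |t|))))) (arakiF β t) := by
  have hp := Real.pi_pos
  have ht' : 0 < |t| := abs_pos.2 ht
  set E := Real.exp (Real.pi * |t| / β) with hE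
  have hE1 : 1 < E := Real.one_lt_exp_iff.2 (by positivity)
  have hE0 : 0 < E := by linarith
  have hq : |E⁻¹| < 1 := by
    rw [abs_of_pos (by positivity)]; exact inv_lt_one_of_one_lt₀ hE1
  have h := (Real.hasSum_log_sub_log_of_abs_lt_one hq).mul_left (2 / (β * Real.pi))
  have hq' : E⁻¹ < 1 := inv_lt_one_of_one_lt₀ hE1
  have hq0 : 0 < E⁻¹ := by positivity
  convert! h using 1
  · funext k
    have : Real.exp (-((2 * (k : ℝ) + 1) * Real.pi / β * |t|)) = E⁻¹ ^ (2 * k + 1) := by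
      rw [hE, ← Real.exp_neg, ← Real.exp_nat_mul]
      congr 1; push_cast; ring
    rw [this]
    field_simp
    ring
  · rw [arakiF, ← hE, ← Real.log_div (by linarith) (by linarith)]
    congr 2
    have : E - 1 ≠ 0 := by linarith
    have : 1 - E⁻¹ ≠ 0 := by linarith
    field_simp

/-- for `t ≠ 0`,
`lim_{R→∞} (1/(2π)) ∫_{-R}^R cos(ωt)·f̃_β(ω) dω = f_β(t)`
(the form of the inverse Fourier transform for the even function `f̃_β`). -/
theorem stmt8 (β : ℝ) (hβ : 0 < β) (t : ℝ) (ht : t ≠ 0) :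
    Filter.Tendsto
      (fun R : ℝ => (1 / (2 * Real.pi)) * ∫ ω in (-R)..R, Real.cos (ω * t) * qbpFtilde β ω)
      Filter.atTop (nhds (arakiF β t)) := by
  have hp := Real.pi_pos
  set a : ℕ → ℝ := fun k => (2 * (k : ℝ) + 1) * Real.pi / β with ha
  have hapos : ∀ k, 0 < a k := fun k => by simp only [ha]; positivity
  have hsum : Summable (fun k => 1 / a k ^ 2) := aux_summable β hβ
  have hS : ∀ R : ℝ, HasSum (fun k : ℕ => ∫ ω in (-R)..R, 8 / β ^ 2 * (Real.cos (ω * t) * (1 / (ω ^ 2 + a k ^ 2))))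
      (∫ ω in (-R)..R, Real.cos (ω * t) * qbpFtilde β ω) := by
    intro R
    refine intervalIntegral.hasSum_integral_of_dominated_convergence
      (fun k _ => 8 / β ^ 2 * (1 / a k ^ 2)) ?_ ?_ ?_ ?_ ?_
    · intro k
      exact ((aux_integrable_cos (a k) (hapos k) t).const_mul _).1.restrict
    · intro k
      refine Filter.Eventually.of_forall fun ω _ => ?_
      have hk := hapos k
      rw [Real.norm_eq_abs, abs_mul, abs_mul, abs_of_pos (show 0 < 8 / β ^ 2 by positivity),
        abs_of_pos (show 0 < 1 / (ω ^ 2 + a k ^ 2) by positivity)]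
      gcongr
      calc _ ≤ 1 * (1 / a k ^ 2) := by
            gcongr
            · exact Real.abs_cos_le_one _
            · nlinarith [sq_nonneg ω]
        _ = _ := one_mul _
    · exact Filter.Eventually.of_forall fun ω _ => hsum.mul_left _
    · exact intervalIntegrable_const
    · have : ∀ᵐ ω : ℝ, ω ≠ 0 := Measure.ae_ne volume 0
      filter_upwards [this] with ω hω _
      refine ((aux_ftilde β hβ ω hω).mul_left (Real.cos (ω * t))).congr_fun ?_
      intro k
      simp only [ha]
      ring
  have hlim : Filter.Tendsto (fun R : ℝ => ∑' k : ℕ, 1 / (2 * Real.pi) * (8 / β ^ 2 *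
      ∫ ω in (-R)..R, Real.cos (ω * t) * (1 / (ω ^ 2 + a k ^ 2)))) Filter.atTop
      (nhds (∑' k : ℕ, 1 / (2 * Real.pi) * (8 / β ^ 2 * (Real.pi / a k * Real.exp (-(a k * |t|)))))) := by
    refine tendsto_tsum_of_dominated_convergence
      (bound := fun k => 1 / (2 * Real.pi) * (8 / β ^ 2 * ((2 + Real.pi) / |t| * (1 / a k ^ 2)))) ?_ ?_ ?_
    · exact ((hsum.mul_left _).mul_left _).mul_left _
    · intro k
      refine Filter.Tendsto.const_mul _ (Filter.Tendsto.const_mul _ ?_)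
      rw [← aux_fourier (a k) (hapos k) t]
      exact intervalIntegral_tendsto_integral (aux_integrable_cos (a k) (hapos k) t)
        Filter.tendsto_neg_atTop_atBot Filter.tendsto_id
    · filter_upwards [Filter.eventually_ge_atTop 0] with R hR k
      rw [Real.norm_eq_abs, abs_mul, abs_mul, abs_of_pos (show 0 < 8 / β ^ 2 by positivity),
        abs_of_pos (show 0 < 1 / (2 * Real.pi) by positivity)]
      gcongr
      exact aux_bound (a k) (hapos k) t ht R hR
  rw [(aux_log β hβ t ht).tsum_eq] at hlim
  refine hlim.congr fun R => ?_
  have := ((hS R).mul_left (1 / (2 * Real.pi))).tsum_eq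
  rw [← this]
  simp_rw [intervalIntegral.integral_const_mul]
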